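/- Let V be a finite set equipped with a partial order ≤ and a binary relation ↠ such that R ↠ P implies P < R. Define integer square matrices L and M indexed by V as follows: L_{PP} = 1 for all P, L_{PQ} = −1 if P ↠ Q, and L_{PQ} = 0 otherwise; and suppose M satisfies M_{QQ} = 1 for all Q, M_{PQ} = 0 whenever P ≠ Q and ¬(P ≤ Q), and M_{PQ} = Σ_{R ∈ V, R ≤ Q, R ↠ P} M_{RQ} whenever P < Q. Then Lᵀ·M is the identity matrix; in particular M is invertible over ℤ, with M = (Lᵀ)⁻¹, and a matrix M satisfying these equations exists and is unique. -/

import Mathlib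

theorem lp_aux
    {V : Type} [Fintype V] [DecidableEq V] [PartialOrder V]
    [DecidableRel ((· ≤ ·) : V → V → Prop)]
    (lp : V → V → Prop) [DecidableRel lp] (hlp : ∀ R P, lp R P → P < R)
    (L M : Matrix V V ℤ)
    (hL : ∀ P Q, L P Q = if P = Q then 1 else if lp P Q then -1 else 0)
    (hMdiag : ∀ Q, M Q Q = 1)
    (hMzero : ∀ P Q, P ≠ Q → ¬ P ≤ Q → M P Q = 0)
    (hMrec : ∀ P Q, P < Q →
      M P Q = ∑ R ∈ Finset.univ.filter (fun R => R ≤ Q ∧ lp R P), M R Q) :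
    L.transpose * M = 1 := by
  ext P Q
  have key : ∀ R, L R P * M R Q
      = (if R = P then M R Q else 0) - (if R ≤ Q ∧ lp R P then M R Q else 0) := by
    intro R
    rw [hL]
    by_cases h1 : R = P
    · subst h1
      have : ¬ lp R R := fun h => lt_irrefl _ (hlp _ _ h)
      simp [this]
    · by_cases h2 : lp R P
      · by_cases h3 : R ≤ Q
        · simp [h1, h2, h3]
        · have : M R Q = 0 := hMzero R Q (fun h => h3 h.le) h3
          simp [this]
      · simp [h1, h2]
  rw [Matrix.mul_apply]
  simp only [Matrix.transpose_apply, key, Finset.sum_sub_distrib]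
  rw [← Finset.sum_filter (fun R => R ≤ Q ∧ lp R P), Finset.sum_ite_eq' Finset.univ P,
    if_pos (Finset.mem_univ P)]
  by_cases hlt : P < Q
  · rw [← hMrec P Q hlt, Matrix.one_apply_ne hlt.ne, sub_self]
  · have he : Finset.univ.filter (fun R => R ≤ Q ∧ lp R P) = ∅ := by
      apply Finset.filter_eq_empty_iff.mpr
      rintro R - ⟨h1, h2⟩
      exact hlt ((hlp _ _ h2).trans_le h1)
    rw [he, Finset.sum_empty, sub_zero]
    by_cases hPQ : P = Q
    · subst hPQ
      rw [hMdiag, Matrix.one_apply_eq]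
    · rw [Matrix.one_apply_ne hPQ]
      exact hMzero P Q hPQ (fun h => hlt (lt_of_le_of_ne h hPQ))

/-- Let `V` be a finite set with a partial order `≤` and a binary
relation `↠` (`lp`) such that `R ↠ P` implies `P < R`.  Let `L` be the linear proximity
matrix (`L P P = 1`, `L P Q = -1` if `P ↠ Q`, `0` otherwise) and let `M` satisfy
`M Q Q = 1`, `M P Q = 0` if `P ≠ Q` and `¬ P ≤ Q`, and
`M P Q = ∑_{R ≤ Q, R ↠ P} M R Q` if `P < Q`.  Then `Lᵀ · M = 1`; in particular `M` is
invertible over `ℤ` with `M = (Lᵀ)⁻¹`, and a matrix `M` satisfying these equations exists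
and is unique. -/
theorem linear_proximity_matrix_inverse
    {V : Type} [Fintype V] [DecidableEq V] [PartialOrder V]
    [DecidableRel ((· ≤ ·) : V → V → Prop)]
    (lp : V → V → Prop) [DecidableRel lp] (hlp : ∀ R P, lp R P → P < R)
    (L M : Matrix V V ℤ)
    (hL : ∀ P Q, L P Q = if P = Q then 1 else if lp P Q then -1 else 0)
    (hMdiag : ∀ Q, M Q Q = 1)
    (hMzero : ∀ P Q, P ≠ Q → ¬ P ≤ Q → M P Q = 0)
    (hMrec : ∀ P Q, P < Q →
      M P Q = ∑ R ∈ Finset.univ.filter (fun R => R ≤ Q ∧ lp R P), M R Q) :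
    L.transpose * M = 1 ∧ M * L.transpose = 1 ∧ M = (L.transpose)⁻¹ ∧
      (∃! M' : Matrix V V ℤ,
        (∀ Q, M' Q Q = 1) ∧ (∀ P Q, P ≠ Q → ¬ P ≤ Q → M' P Q = 0) ∧
        ∀ P Q, P < Q →
          M' P Q = ∑ R ∈ Finset.univ.filter (fun R => R ≤ Q ∧ lp R P), M' R Q) := by
  have h1 := lp_aux lp hlp L M hL hMdiag hMzero hMrec
  have h2 : M * L.transpose = 1 := mul_eq_one_comm.mp h1
  refine ⟨h1, h2, (Matrix.inv_eq_right_inv h1).symm, M, ⟨hMdiag, hMzero, hMrec⟩, ?_⟩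
  rintro M' ⟨a, b, c⟩
  have h3 := lp_aux lp hlp L M' hL a b c
  exact (left_inv_eq_right_inv h2 h3).symm
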